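/- Let f be a KPP reaction function that is in addition twice continuously differentiable in a neighbourhood of 1. Then the propagation speed of the cut-off problem satisfies the two-term large cut-off asymptotic expansion: ( v*(u_c) − (1 − u_c) |f'(1)|^{1/2} ) / (1 − u_c)² → (1/6) |f'(1)|^{1/2} ( 3 + f''(1)/|f'(1)| ) as u_c → 1⁻; equivalently, v*(u_c) = (1 − u_c)|f'(1)|^{1/2} + (1/6)(1 − u_c)²|f'(1)|^{1/2}(3 + f''(1)/|f'(1)|) + o((1 − u_c)²) as u_c → 1⁻. -/

import Mathlib

/-!
Write `a = |f'(1)|`, `b = f''(1)`, `δ = 1 - uc`, `s = 1 - U`, `p = -U'` and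
`G(s) = ∫₀ˢ f(1 - t) dt`, so that `G(s) = a s² / 2 + b s³ / 6 + o(s³)`.

On `y > 0` the equation is `U'' + v U' = 0`, and decay at `+∞` forces `U' + v U = 0`; hence
`U'(0) = -v uc` and `v > 0`. On `y < 0` the profile is decreasing and stays above `uc`, so the
equation there is the uncut one, and the modified energy `p² / 2 - G(s) + v c s² / 2` has
derivative `v p (c s - p)` and tends to `0` along a sequence going to `-∞`. Consequently

* `c = 0` gives `p² ≤ 2 G(s)`, hence `p ≤ c₁ s` with `c₁` close to `√a`;
* `c = c₁` then gives `p² ≥ 2 G(s) - v c₁ s²`, hence `p ≥ c₂ s` with `c₂` close to `√a`, because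
  `v = p(0) / uc = O(δ)`;
* `c = c₂` gives the reverse inequality `p² ≤ 2 G(s) - v c₂ s²`.

At `y = 0`, where `p = v uc` and `s = δ`, this says `(v uc)² = 2 G(δ) - v δ² R` with `R → √a`
and `v uc / δ → √a`. Inserting the expansion of `G` and solving for `v` gives the claim.
-/

open Real Filter Topology

/-- A KPP reaction function: `f ∈ C¹`, `f 0 = f 1 = 0`, `f' 0 = 1`, `f' 1 < 0`,
`0 < f u ≤ u` on `(0,1)` and `f u < 0` for `u > 1`. -/
def IsKPP (f : ℝ → ℝ) : Prop :=
  ContDiff ℝ 1 f ∧ f 0 = 0 ∧ f 1 = 0 ∧ deriv f 0 = 1 ∧ deriv f 1 < 0 ∧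
  (∀ u : ℝ, 0 < u → u < 1 → 0 < f u ∧ f u ≤ u) ∧
  (∀ u : ℝ, 1 < u → f u < 0)

/-- The cut-off reaction function: `f_c u = f u` for `u > u_c`, and `0` for `u ≤ u_c`. -/
noncomputable def cutoff (f : ℝ → ℝ) (uc : ℝ) : ℝ → ℝ :=
  fun u => if uc < u then f u else 0

/-- A permanent form travelling wave solution with cut-off `uc` and speed `v`. -/
def IsPTW (f : ℝ → ℝ) (uc v : ℝ) (U : ℝ → ℝ) : Prop :=
  ContDiff ℝ 1 U ∧
  (∀ y : ℝ, y ≠ 0 → ContDiffAt ℝ 2 U y) ∧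
  (∀ y : ℝ, y ≠ 0 → deriv (deriv U) y + v * deriv U y + cutoff f uc (U y) = 0) ∧
  U 0 = uc ∧
  (∀ y : ℝ, y < 0 → uc ≤ U y ∧ U y ≤ 1) ∧
  (∀ y : ℝ, 0 < y → 0 ≤ U y ∧ U y ≤ uc) ∧
  Tendsto U atBot (𝓝 1) ∧
  Tendsto U atTop (𝓝 0)


/-! ### Vanishing of the slope along sequences -/

/-- By the mean value theorem, a differentiable function with a limit at `-∞` has derivative
tending to zero along some sequence going to `-∞`. -/
lemma exists_seq_deriv_atBot {U : ℝ → ℝ} (hU : Differentiable ℝ U) {l : ℝ}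
    (h : Tendsto U atBot (𝓝 l)) :
    ∃ y : ℕ → ℝ, Tendsto y atTop atBot ∧ Tendsto (fun n => deriv U (y n)) atTop (𝓝 0) := by
  have key : ∀ n : ℕ, ∃ z ∈ Set.Ioo (-(n : ℝ) - 1) (-(n : ℝ)),
      deriv U z = U (-(n : ℝ)) - U (-(n : ℝ) - 1) := by
    intro n
    obtain ⟨z, hz, hz'⟩ := exists_deriv_eq_slope U (a := -(n : ℝ) - 1) (b := -(n : ℝ))
      (by linarith) hU.continuous.continuousOn hU.differentiableOn
    refine ⟨z, hz, ?_⟩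
    rw [hz']
    simp
  choose y hy hy' using key
  have h1 : Tendsto (fun n : ℕ => -(n : ℝ)) atTop atBot :=
    tendsto_neg_atTop_atBot.comp tendsto_natCast_atTop_atTop
  have h2 : Tendsto (fun n : ℕ => -(n : ℝ) - 1) atTop atBot :=
    tendsto_atBot_add_const_right _ _ h1
  refine ⟨y, tendsto_atBot_mono (fun n => (hy n).2.le) h1, ?_⟩
  simp_rw [hy']
  simpa using (h.comp h1).sub (h.comp h2)

lemma exists_seq_deriv_atTop {U : ℝ → ℝ} (hU : Differentiable ℝ U) {l : ℝ}
    (h : Tendsto U atTop (𝓝 l)) :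
    ∃ y : ℕ → ℝ, Tendsto y atTop atTop ∧ Tendsto (fun n => deriv U (y n)) atTop (𝓝 0) := by
  obtain ⟨y, hy, hy'⟩ := exists_seq_deriv_atBot (U := fun x => U (-x))
    (hU.comp differentiable_neg) (h.comp tendsto_neg_atBot_atTop)
  refine ⟨fun n => -y n, tendsto_neg_atBot_atTop.comp hy, ?_⟩
  simp_rw [deriv_comp_neg] at hy'
  simpa using hy'.neg

/-! ### Qualitative properties of the profile -/

lemma IsPTW.differentiable {f U : ℝ → ℝ} {uc v : ℝ} (h : IsPTW f uc v U) :
    Differentiable ℝ U := h.1.differentiable (by norm_num)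

lemma IsPTW.continuous_deriv {f U : ℝ → ℝ} {uc v : ℝ} (h : IsPTW f uc v U) :
    Continuous (deriv U) := h.1.continuous_deriv (by norm_num)

lemma IsPTW.hasDerivAt_deriv {f U : ℝ → ℝ} {uc v : ℝ} (h : IsPTW f uc v U) {y : ℝ} (hy : y ≠ 0) :
    HasDerivAt (deriv U) (-(v * deriv U y) - cutoff f uc (U y)) y := by
  have h1 : DifferentiableAt ℝ (deriv U) y := by
    have := ((h.2.1 y hy).fderiv_right (m := 1) (by norm_num)).clm_apply
      (contDiffAt_const (c := (1 : ℝ)))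
    exact this.differentiableAt (by norm_num)
  have h2 := h.2.2.1 y hy
  have h3 := h1.hasDerivAt
  rwa [show deriv (deriv U) y = -(v * deriv U y) - cutoff f uc (U y) by linarith] at h3

/-- Ahead of the cut-off the profile satisfies `U' + v U = 0`; this fixes the slope at the
matching point and excludes `v = 0`. -/
lemma IsPTW.tail {f U : ℝ → ℝ} {uc v : ℝ} (h : IsPTW f uc v U) (huc : 0 < uc) (hv : 0 ≤ v) :
    0 < v ∧ deriv U 0 = -(v * uc) := by
  have hd := h.differentiable
  have hc := h.continuous_deriv
  have hU0 : U 0 = uc := h.2.2.2.1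
  have hlim : Tendsto U atTop (𝓝 0) := h.2.2.2.2.2.2.2
  have hderiv : ∀ y ∈ interior (Set.Ici (0 : ℝ)),
      HasDerivAt (fun y => deriv U y + v * U y) 0 y := by
    intro y hy
    rw [interior_Ici, Set.mem_Ioi] at hy
    have h1 := (h.hasDerivAt_deriv hy.ne').add ((hd y).hasDerivAt.const_mul v)
    have h2 : ¬ uc < U y := not_lt.mpr (h.2.2.2.2.2.1 y hy).2
    refine h1.congr_deriv ?_
    simp [cutoff, h2]
  have hcont : ContinuousOn (fun y => deriv U y + v * U y) (Set.Ici 0) :=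
    (hc.add (continuous_const.mul hd.continuous)).continuousOn
  have hdiff : DifferentiableOn ℝ (fun y => deriv U y + v * U y) (interior (Set.Ici 0)) :=
    fun y hy => (hderiv y hy).differentiableAt.differentiableWithinAt
  have hconst : ∀ y, 0 ≤ y → deriv U y + v * U y = deriv U 0 + v * U 0 := by
    intro y hy
    refine le_antisymm ?_ ?_
    · exact antitoneOn_of_deriv_nonpos (convex_Ici 0) hcont hdiff
        (fun x hx => (hderiv x hx).deriv.le) Set.self_mem_Ici hy hy
    · exact monotoneOn_of_deriv_nonneg (convex_Ici 0) hcont hdiff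
        (fun x hx => (hderiv x hx).deriv.ge) Set.self_mem_Ici hy hy
  have hK : deriv U 0 + v * U 0 = 0 := by
    obtain ⟨y, hy, hy'⟩ := exists_seq_deriv_atTop hd hlim
    have h1 : Tendsto (fun n => deriv U (y n) + v * U (y n)) atTop (𝓝 (0 + v * 0)) :=
      hy'.add ((hlim.comp hy).const_mul v)
    have h2 : (fun n => deriv U (y n) + v * U (y n)) =ᶠ[atTop]
        fun _ => deriv U 0 + v * U 0 := by
      filter_upwards [hy.eventually_ge_atTop 0] with n hn using hconst _ hn
    have := tendsto_nhds_unique (h1.congr' h2) tendsto_const_nhds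
    linarith
  rw [hU0] at hK
  refine ⟨lt_of_le_of_ne hv ?_, by linarith⟩
  rintro rfl
  have hmono : ∀ y, 0 ≤ y → uc ≤ U y := by
    intro y hy
    rw [← hU0]
    refine monotoneOn_of_deriv_nonneg (convex_Ici 0) hd.continuous.continuousOn
      hd.differentiableOn (fun x hx => ?_) Set.self_mem_Ici hy hy
    rw [interior_Ici, Set.mem_Ioi] at hx
    have := hconst x hx.le
    rw [hU0] at this
    linarith
  have := ge_of_tendsto hlim (eventually_atTop.mpr ⟨0, hmono⟩)
  linarith

/-- A function which is monotone on `(-∞, 0]` and tends to zero along a sequence going to `-∞` is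
nonnegative there. -/
lemma nonneg_of_deriv_nonneg_of_seq {Φ Φ' : ℝ → ℝ} (hc : Continuous Φ)
    (hd : ∀ y < 0, HasDerivAt Φ (Φ' y) y) (hnonneg : ∀ y < 0, 0 ≤ Φ' y) {z : ℕ → ℝ}
    (hz : Tendsto z atTop atBot) (hΦ : Tendsto (fun n => Φ (z n)) atTop (𝓝 0)) :
    ∀ y ≤ 0, 0 ≤ Φ y := by
  intro y hy
  refine le_of_tendsto hΦ ?_
  filter_upwards [hz.eventually_le_atBot y] with n hn
  refine monotoneOn_of_deriv_nonneg (convex_Iic 0) hc.continuousOn ?_ ?_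
    (Set.mem_Iic.mpr (hn.trans hy)) hy hn
  · rw [interior_Iic]
    exact fun x hx => (hd x hx).differentiableAt.differentiableWithinAt
  · rw [interior_Iic]
    intro x hx
    rw [(hd x hx).deriv]
    exact hnonneg x hx

/-- Behind the cut-off `e^{vy} U'` is nonincreasing, so a positive slope somewhere would bound the
slope away from zero near `-∞`. -/
lemma IsPTW.deriv_nonpos {f U : ℝ → ℝ} {uc v : ℝ} (h : IsPTW f uc v U) (hv : 0 ≤ v)
    (hf : ∀ u, uc < u → u ≤ 1 → 0 ≤ f u) : ∀ y ≤ 0, deriv U y ≤ 0 := by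
  obtain ⟨z, hz, hz'⟩ := exists_seq_deriv_atBot h.differentiable h.2.2.2.2.2.2.1
  have hexp : ∀ y, HasDerivAt (fun y => exp (v * y)) (exp (v * y) * v) y := fun y => by
    simpa using ((hasDerivAt_id y).const_mul v).exp
  have key := nonneg_of_deriv_nonneg_of_seq (Φ := fun y => -(exp (v * y) * deriv U y))
    (Φ' := fun y => exp (v * y) * cutoff f uc (U y))
    (by have := h.continuous_deriv; fun_prop)
    (fun y hy => by
      refine ((hexp y).mul (h.hasDerivAt_deriv hy.ne)).neg.congr_deriv ?_
      ring)
    (fun y hy => by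
      refine mul_nonneg (exp_pos _).le ?_
      unfold cutoff
      split_ifs with hu
      · exact hf _ hu (h.2.2.2.2.1 y hy).2
      · exact le_rfl) hz
    (by
      have hbd : ∀ᶠ n in atTop, ‖-(exp (v * z n) * deriv U (z n))‖ ≤ |deriv U (z n)| := by
        filter_upwards [hz.eventually_le_atBot 0] with n hn
        rw [norm_neg, norm_mul, Real.norm_eq_abs, Real.norm_eq_abs, abs_of_pos (exp_pos _)]
        refine mul_le_of_le_one_left (abs_nonneg _) (exp_le_one_iff.mpr ?_)
        exact mul_nonpos_of_nonneg_of_nonpos hv hn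
      exact squeeze_zero_norm' hbd (by simpa using hz'.abs))
  intro y hy
  have := key y hy
  simp only [Left.nonneg_neg_iff] at this
  exact nonpos_of_mul_nonpos_right this (exp_pos _)

lemma IsPTW.cutoff_lt {f U : ℝ → ℝ} {uc v : ℝ} (h : IsPTW f uc v U) (huc : 0 < uc) (hv : 0 ≤ v)
    (hf : ∀ u, uc < u → u ≤ 1 → 0 ≤ f u) : ∀ y < 0, uc < U y := by
  intro y hy
  obtain ⟨hv', hU'0⟩ := h.tail huc hv
  have hd := h.differentiable
  have hanti : AntitoneOn U (Set.Iic 0) := by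
    refine antitoneOn_of_deriv_nonpos (convex_Iic 0) hd.continuous.continuousOn
      hd.differentiableOn (fun x hx => ?_)
    rw [interior_Iic] at hx
    exact h.deriv_nonpos hv hf x (le_of_lt hx)
  refine lt_of_le_of_ne (h.2.2.2.2.1 y hy).1 fun hEq => ?_
  -- Otherwise `U = uc` on `[y, 0]`, against `U'(0) = -v uc < 0`.
  have hconst : ∀ x ∈ Set.Ioo y 0, deriv U x = 0 := by
    intro x hx
    have : U =ᶠ[𝓝 x] fun _ => uc := by
      filter_upwards [Ioo_mem_nhds hx.1 hx.2] with t ht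
      refine le_antisymm ?_ (h.2.2.2.2.1 t ht.2).1
      rw [hEq]
      exact hanti (Set.mem_Iic.mpr hy.le) (Set.mem_Iic.mpr ht.2.le) ht.1.le
    rw [this.deriv_eq, deriv_const]
  have h1 : Tendsto (deriv U) (𝓝[<] 0) (𝓝 (deriv U 0)) :=
    h.continuous_deriv.continuousAt.tendsto.mono_left nhdsWithin_le_nhds
  have h2 : deriv U =ᶠ[𝓝[<] 0] fun _ => (0 : ℝ) := by
    filter_upwards [Ioo_mem_nhdsLT hy] with x hx using hconst x hx
  have h3 := tendsto_nhds_unique (h1.congr' h2) tendsto_const_nhds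
  have : 0 < v * uc := mul_pos hv' huc
  linarith

/-! ### Energy estimates behind the cut-off -/

/-- The modified energy `U'² / 2 - G(1 - U) + v c (1 - U)² / 2`. -/
noncomputable def energy (G U : ℝ → ℝ) (v c y : ℝ) : ℝ :=
  deriv U y ^ 2 / 2 - G (1 - U y) + v * c * (1 - U y) ^ 2 / 2

lemma IsPTW.hasDerivAt_energy {f U G : ℝ → ℝ} {uc v : ℝ} (h : IsPTW f uc v U) (c : ℝ)
    (hlt : ∀ y < 0, uc < U y) (hG : ∀ s, HasDerivAt G (f (1 - s)) s) {y : ℝ} (hy : y < 0) :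
    HasDerivAt (energy G U v c) (v * (-deriv U y) * (c * (1 - U y) + deriv U y)) y := by
  have h1 := h.hasDerivAt_deriv hy.ne
  have h2 : HasDerivAt (fun y => 1 - U y) (-deriv U y) y :=
    (h.differentiable y).hasDerivAt.const_sub 1
  have h3 := (hG (1 - U y)).comp y h2
  have h4 := (((h1.pow 2).div_const 2).sub h3).add (((h2.pow 2).const_mul (v * c)).div_const 2)
  refine h4.congr_deriv ?_
  simp only [cutoff, if_pos (hlt y hy), sub_sub_cancel]
  ring

lemma IsPTW.continuous_energy {f U G : ℝ → ℝ} {uc v : ℝ} (h : IsPTW f uc v U) (c : ℝ)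
    (hG : Continuous G) : Continuous (energy G U v c) := by
  have h1 := h.continuous_deriv
  have h2 := h.differentiable.continuous
  unfold energy
  fun_prop

lemma IsPTW.exists_seq_energy {f U G : ℝ → ℝ} {uc v : ℝ} (h : IsPTW f uc v U) (c : ℝ)
    (hG : Continuous G) (hG0 : G 0 = 0) :
    ∃ z : ℕ → ℝ, Tendsto z atTop atBot ∧
      Tendsto (fun n => energy G U v c (z n)) atTop (𝓝 0) := by
  obtain ⟨z, hz, hz'⟩ := exists_seq_deriv_atBot h.differentiable h.2.2.2.2.2.2.1
  refine ⟨z, hz, ?_⟩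
  have h1 : Tendsto (fun n => 1 - U (z n)) atTop (𝓝 0) := by
    simpa using (h.2.2.2.2.2.2.1.comp hz).const_sub 1
  have h2 : Tendsto (fun n => G (1 - U (z n))) atTop (𝓝 0) := by
    simpa [hG0, Function.comp_def] using (hG.tendsto 0).comp h1
  have h3 := (((hz'.pow 2).div_const 2).sub h2).add (((h1.pow 2).const_mul (v * c)).div_const 2)
  simpa [energy] using h3

/-- An upper bound `p ≤ c s` on the trajectory gives the lower bound `p² ≥ 2 G(s) - v c s²`. -/
lemma IsPTW.le_sq_deriv {f U G : ℝ → ℝ} {uc v : ℝ} (h : IsPTW f uc v U) (hv : 0 ≤ v) {c : ℝ}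
    (hlt : ∀ y < 0, uc < U y) (hG : ∀ s, HasDerivAt G (f (1 - s)) s) (hG0 : G 0 = 0)
    (hU' : ∀ y ≤ 0, deriv U y ≤ 0) (hc : ∀ y < 0, -deriv U y ≤ c * (1 - U y)) :
    ∀ y ≤ 0, 2 * G (1 - U y) - v * c * (1 - U y) ^ 2 ≤ deriv U y ^ 2 := by
  have hGc : Continuous G := continuous_iff_continuousAt.mpr fun s => (hG s).continuousAt
  obtain ⟨z, hz, hz'⟩ := h.exists_seq_energy c hGc hG0
  intro y hy
  have := nonneg_of_deriv_nonneg_of_seq (h.continuous_energy c hGc)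
    (fun y hy => h.hasDerivAt_energy c hlt hG hy)
    (fun y hy => mul_nonneg (mul_nonneg hv (by linarith [hU' y hy.le])) (by linarith [hc y hy]))
    hz hz' y hy
  unfold energy at this
  linarith

/-- A lower bound `p ≥ c s` on the trajectory gives the upper bound `p² ≤ 2 G(s) - v c s²`. -/
lemma IsPTW.sq_deriv_le {f U G : ℝ → ℝ} {uc v : ℝ} (h : IsPTW f uc v U) (hv : 0 ≤ v) {c : ℝ}
    (hlt : ∀ y < 0, uc < U y) (hG : ∀ s, HasDerivAt G (f (1 - s)) s) (hG0 : G 0 = 0)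
    (hU' : ∀ y ≤ 0, deriv U y ≤ 0) (hc : ∀ y < 0, c * (1 - U y) ≤ -deriv U y) :
    ∀ y ≤ 0, deriv U y ^ 2 ≤ 2 * G (1 - U y) - v * c * (1 - U y) ^ 2 := by
  have hGc : Continuous G := continuous_iff_continuousAt.mpr fun s => (hG s).continuousAt
  obtain ⟨z, hz, hz'⟩ := h.exists_seq_energy c hGc hG0
  intro y hy
  have := nonneg_of_deriv_nonneg_of_seq (h.continuous_energy c hGc).neg
    (fun y hy => (h.hasDerivAt_energy c hlt hG hy).neg)
    (fun y hy => by
      rw [Left.nonneg_neg_iff]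
      exact mul_nonpos_of_nonneg_of_nonpos (mul_nonneg hv (by linarith [hU' y hy.le]))
        (by linarith [hc y hy]))
    hz (by simpa using hz'.neg) y hy
  simp only [Pi.neg_apply, energy] at this
  linarith

/-- Two-sided bounds on the speed from two-sided quadratic bounds on the potential `G`. The extra
term `c₁² (1 - uc) / uc` absorbs `v c₁`, since `v uc ≤ c₁ (1 - uc)`. -/
lemma IsPTW.speed_bounds {f U G : ℝ → ℝ} {uc v : ℝ} (h : IsPTW f uc v U) (huc : 0 < uc)
    (huc1 : uc < 1) (hv : 0 ≤ v) (hf : ∀ u, uc < u → u ≤ 1 → 0 ≤ f u)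
    (hG : ∀ s, HasDerivAt G (f (1 - s)) s) (hG0 : G 0 = 0) {c₁ c₂ : ℝ} (hc₁ : 0 ≤ c₁)
    (hG₁ : ∀ s, 0 ≤ s → s ≤ 1 - uc → 2 * G s ≤ c₁ ^ 2 * s ^ 2)
    (hG₂ : ∀ s, 0 ≤ s → s ≤ 1 - uc → (c₂ ^ 2 + c₁ ^ 2 * (1 - uc) / uc) * s ^ 2 ≤ 2 * G s) :
    v * uc ≤ c₁ * (1 - uc) ∧ c₂ * (1 - uc) ≤ v * uc ∧
    2 * G (1 - uc) - v * c₁ * (1 - uc) ^ 2 ≤ (v * uc) ^ 2 ∧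
    (v * uc) ^ 2 ≤ 2 * G (1 - uc) - v * c₂ * (1 - uc) ^ 2 := by
  have hlt := h.cutoff_lt huc hv hf
  have hU' := h.deriv_nonpos hv hf
  obtain ⟨hv', hU'0⟩ := h.tail huc hv
  have hU0 : U 0 = uc := h.2.2.2.1
  have hs : ∀ y ≤ 0, 0 ≤ 1 - U y ∧ 1 - U y ≤ 1 - uc := by
    intro y hy
    rcases hy.lt_or_eq with hy | rfl
    · have := h.2.2.2.2.1 y hy
      constructor <;> linarith
    · rw [hU0]
      constructor <;> linarith
  have hup : ∀ y ≤ 0, -deriv U y ≤ c₁ * (1 - U y) := by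
    intro y hy
    have h1 := h.sq_deriv_le hv (c := 0) hlt hG hG0 hU'
      (fun y hy => by linarith [hU' y hy.le]) y hy
    have h2 := hG₁ _ (hs y hy).1 (hs y hy).2
    refine le_of_sq_le_sq ?_ (mul_nonneg hc₁ (hs y hy).1)
    rw [neg_sq, mul_pow]
    linarith
  have hv1 : v * uc ≤ c₁ * (1 - uc) := by
    have := hup 0 le_rfl
    rwa [hU'0, hU0, neg_neg] at this
  have hlow := h.le_sq_deriv hv hlt hG hG0 hU' (fun y hy => hup y hy.le)
  have hdown : ∀ y ≤ 0, c₂ * (1 - U y) ≤ -deriv U y := by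
    intro y hy
    have h1 := hlow y hy
    have h2 := hG₂ _ (hs y hy).1 (hs y hy).2
    have h3 : v * c₁ ≤ c₁ ^ 2 * (1 - uc) / uc := by
      rw [le_div_iff₀ huc]
      nlinarith
    have h4 : v * c₁ * (1 - U y) ^ 2 ≤ c₁ ^ 2 * (1 - uc) / uc * (1 - U y) ^ 2 := by gcongr
    refine le_of_sq_le_sq ?_ (by linarith [hU' y hy])
    rw [neg_sq, mul_pow]
    linarith
  have hhigh := h.sq_deriv_le hv hlt hG hG0 hU' (fun y hy => hdown y hy.le)
  have h0 := hlow 0 le_rfl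
  have hhigh0 := hhigh 0 le_rfl
  have hdown0 := hdown 0 le_rfl
  rw [hU'0, hU0, neg_sq] at h0 hhigh0
  rw [hU'0, hU0, neg_neg] at hdown0
  exact ⟨hv1, hdown0, h0, hhigh0⟩

/-! ### Asymptotics as the cut-off tends to one -/

/-- The expansion `2 G(s) = a s² + b s³ / 3 + o(s³)`, by l'Hôpital's rule applied twice. -/
lemma tendsto_potential_expansion {f G : ℝ → ℝ} (hf : Differentiable ℝ f) (hf1 : f 1 = 0)
    {b : ℝ} (hb : HasDerivAt (deriv f) b 1) (hG : ∀ s, HasDerivAt G (f (1 - s)) s)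
    (hG0 : G 0 = 0) :
    Tendsto (fun s => (2 * G s / s ^ 2 - -deriv f 1) / s) (𝓝[>] 0) (𝓝 (b / 3)) := by
  have hsub : ∀ s : ℝ, HasDerivAt (fun s => 1 - s) (-1) s := fun s => by
    simpa using (hasDerivAt_id s).const_sub 1
  have hf' : ∀ s, HasDerivAt (fun s => f (1 - s)) (-deriv f (1 - s)) s := fun s => by
    refine ((hf (1 - s)).hasDerivAt.comp s (hsub s)).congr_deriv ?_
    ring
  have hGc : Continuous G := continuous_iff_continuousAt.mpr fun s => (hG s).continuousAt
  have hfc : Continuous f := hf.continuous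
  have lim0 : ∀ g : ℝ → ℝ, Continuous g → g 0 = 0 → Tendsto g (𝓝[>] 0) (𝓝 0) := by
    intro g hg hg0
    have := hg.tendsto 0
    rw [hg0] at this
    exact this.mono_left nhdsWithin_le_nhds
  have hpos : ∀ᶠ s : ℝ in 𝓝[>] 0, 0 < s := self_mem_nhdsWithin
  have h1 : Tendsto (fun s => (-(2 * deriv f (1 - s)) + 2 * deriv f 1) / (6 * s)) (𝓝[>] 0)
      (𝓝 (b / 3)) := by
    have h2 : HasDerivAt (fun s => deriv f (1 - s)) (-b) 0 := by
      have h3 : HasDerivAt (deriv f) b (1 - 0) := by simpa using hb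
      refine (h3.comp 0 (hsub 0)).congr_deriv ?_
      ring
    have h4 := (h2.tendsto_slope_zero_right).const_mul (-(1 / 3))
    rw [show -(1 / 3) * -b = b / 3 by ring] at h4
    refine h4.congr' ?_
    filter_upwards [hpos] with s hs
    simp only [zero_add, sub_zero, smul_eq_mul]
    field_simp
    ring
  have h2 : Tendsto (fun s => (2 * f (1 - s) + 2 * deriv f 1 * s) / (3 * s ^ 2)) (𝓝[>] 0)
      (𝓝 (b / 3)) := by
    refine HasDerivAt.lhopital_zero_nhdsGT
      (f' := fun s => -(2 * deriv f (1 - s)) + 2 * deriv f 1) (g' := fun s => 6 * s)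
      (.of_forall fun s => ?_) (.of_forall fun s => ?_) ?_ (lim0 _ (by fun_prop) (by simp [hf1]))
      (lim0 _ (by fun_prop) (by simp)) h1
    · refine (((hf' s).const_mul 2).add ((hasDerivAt_id s).const_mul (2 * deriv f 1))).congr_deriv ?_
      ring
    · refine ((hasDerivAt_pow 2 s).const_mul 3).congr_deriv ?_
      norm_num
      ring
    · filter_upwards [hpos] with s hs
      positivity
  have h3 : Tendsto (fun s => (2 * G s + deriv f 1 * s ^ 2) / s ^ 3) (𝓝[>] 0) (𝓝 (b / 3)) := by
    refine HasDerivAt.lhopital_zero_nhdsGT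
      (f' := fun s => 2 * f (1 - s) + 2 * deriv f 1 * s) (g' := fun s => 3 * s ^ 2)
      (.of_forall fun s => ?_) (.of_forall fun s => ?_) ?_ (lim0 _ (by fun_prop) (by simp [hG0]))
      (lim0 _ (by fun_prop) (by simp)) h2
    · refine (((hG s).const_mul 2).add ((hasDerivAt_pow 2 s).const_mul (deriv f 1))).congr_deriv ?_
      norm_num
      ring
    · refine (hasDerivAt_pow 3 s).congr_deriv ?_
      norm_num
    · filter_upwards [hpos] with s hs
      positivity
  refine h3.congr' ?_
  filter_upwards [hpos] with s hs
  field_simp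
  ring

/-- The quotients `v uc / (1 - uc)` and `R = (2 G(1 - uc) - (v uc)²) / (v (1 - uc)²)` are both
within `η` of `r = √a` once `uc` is close to `1`. -/
lemma eventually_speed_bounds {f G vstar : ℝ → ℝ} (hf : ∀ u, 0 < u → u ≤ 1 → 0 ≤ f u)
    (hvstar : ∀ uc ∈ Set.Ioo (0:ℝ) 1, 0 ≤ vstar uc ∧ ∃ U : ℝ → ℝ, IsPTW f uc (vstar uc) U)
    (hG : ∀ s, HasDerivAt G (f (1 - s)) s) (hG0 : G 0 = 0) {r : ℝ} (hr : 0 < r)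
    (hlim : Tendsto (fun s => 2 * G s / s ^ 2) (𝓝[>] 0) (𝓝 (r ^ 2))) {η : ℝ} (hη : 0 < η) :
    ∀ᶠ uc in 𝓝[<] (1:ℝ), |vstar uc * uc / (1 - uc) - r| ≤ η ∧
      |(2 * G (1 - uc) - (vstar uc * uc) ^ 2) / (vstar uc * (1 - uc) ^ 2) - r| ≤ η := by
  obtain ⟨ε, hε, hεη, hεr⟩ : ∃ ε, 0 < ε ∧ ε ≤ η ∧ ε < r :=
    ⟨min η (r / 2), by positivity, min_le_left _ _,
      (min_le_right _ _).trans_lt (by linarith)⟩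
  -- The midpoint of `(r - ε)²` and `r²` leaves room for the term `c₁² (1 - uc) / uc`.
  set m := ((r - ε) ^ 2 + r ^ 2) / 2 with hm
  have hlt : (r - ε) ^ 2 < r ^ 2 := by nlinarith
  have hev := (hlim.eventually_le_const (show r ^ 2 < (r + ε) ^ 2 by nlinarith)).and
    (hlim.eventually_const_le (show m < r ^ 2 by rw [hm]; linarith))
  obtain ⟨δ₀, hδ₀, hsub⟩ := mem_nhdsGT_iff_exists_Ioc_subset.mp hev
  have hδ₀ : 0 < δ₀ := hδ₀
  have hbd : ∀ s, 0 ≤ s → s ≤ δ₀ → 2 * G s ≤ (r + ε) ^ 2 * s ^ 2 ∧ m * s ^ 2 ≤ 2 * G s := by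
    intro s hs0 hs
    rcases hs0.eq_or_lt with rfl | hs0
    · simp [hG0]
    · have h1 := hsub ⟨hs0, hs⟩
      simp only [Set.mem_ofPred_eq] at h1
      rw [div_le_iff₀ (by positivity), le_div_iff₀ (by positivity)] at h1
      exact h1
  have hsmall : ∀ᶠ uc in 𝓝[<] (1:ℝ), (r + ε) ^ 2 * (1 - uc) / uc ≤ m - (r - ε) ^ 2 := by
    have : Tendsto (fun uc : ℝ => (r + ε) ^ 2 * (1 - uc) / uc) (𝓝 1)
        (𝓝 ((r + ε) ^ 2 * (1 - 1) / 1)) :=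
      ((tendsto_const_nhds.sub tendsto_id).const_mul _).div tendsto_id one_ne_zero
    refine (this.mono_left nhdsWithin_le_nhds).eventually_le_const ?_
    rw [hm]
    norm_num
    linarith
  have hIoo : ∀ᶠ uc in 𝓝[<] (1:ℝ), uc ∈ Set.Ioo (max 0 (1 - δ₀)) 1 :=
    Ioo_mem_nhdsLT (max_lt one_pos (by linarith))
  filter_upwards [hsmall, hIoo] with uc h1 h2
  obtain ⟨h2, huc1⟩ := h2
  obtain ⟨huc, h2⟩ := max_lt_iff.mp h2
  obtain ⟨hv, U, hU⟩ := hvstar uc ⟨huc, huc1⟩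
  have hv' := (hU.tail huc hv).1
  have hδ : 0 < 1 - uc := by linarith
  obtain ⟨b1, b2, b3, b4⟩ := hU.speed_bounds huc huc1 hv (fun u hu => hf u (huc.trans hu)) hG hG0
    (c₁ := r + ε) (c₂ := r - ε) (by positivity)
    (fun s hs0 hs => (hbd s hs0 (by linarith)).1)
    (fun s hs0 hs => le_trans (by gcongr; linarith) (hbd s hs0 (by linarith)).2)
  constructor
  · refine le_trans ?_ hεη
    rw [abs_le, neg_le_sub_iff_le_add, sub_le_iff_le_add, div_le_iff₀ hδ,
      ← sub_le_iff_le_add, le_div_iff₀ hδ]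
    constructor <;> linarith
  · refine le_trans ?_ hεη
    rw [abs_le, neg_le_sub_iff_le_add, sub_le_iff_le_add, div_le_iff₀ (by positivity),
      ← sub_le_iff_le_add, le_div_iff₀ (by positivity)]
    constructor <;> linarith

/-- Two-term large cut-off asymptotic expansion of the propagation speed. -/
theorem vstar_large_cutoff_expansion (f : ℝ → ℝ) (hf : IsKPP f)
    (hf2 : ContDiffAt ℝ 2 f 1) (vstar : ℝ → ℝ)
    (hvstar : ∀ uc ∈ Set.Ioo (0:ℝ) 1, 0 ≤ vstar uc ∧ ∃ U : ℝ → ℝ, IsPTW f uc (vstar uc) U) :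
    Tendsto
      (fun uc => (vstar uc - (1 - uc) * Real.sqrt |deriv f 1|) / (1 - uc) ^ 2)
      (𝓝[<] (1:ℝ))
      (𝓝 ((1 / 6) * Real.sqrt |deriv f 1| *
        (3 + deriv (deriv f) 1 / |deriv f 1|))) := by
  obtain ⟨hC1, -, hf1, -, hf1', hpos, -⟩ := hf
  have hfd : Differentiable ℝ f := hC1.differentiable (by norm_num)
  have hb : HasDerivAt (deriv f) (deriv (deriv f) 1) 1 := by
    have := (hf2.fderiv_right (m := 1) (by norm_num)).clm_apply
      (contDiffAt_const (c := (1 : ℝ)))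
    exact (this.differentiableAt (by norm_num)).hasDerivAt
  have hf0 : ∀ u, 0 < u → u ≤ 1 → 0 ≤ f u := by
    intro u hu hu1
    rcases hu1.lt_or_eq with h | rfl
    · exact (hpos u hu h).1.le
    · exact hf1.ge
  set G : ℝ → ℝ := fun s => ∫ t in (0:ℝ)..s, f (1 - t) with hGdef
  have hG : ∀ s, HasDerivAt G (f (1 - s)) s := fun s =>
    (hfd.continuous.comp (continuous_const.sub continuous_id)).integral_hasStrictDerivAt
      0 s |>.hasDerivAt
  have hG0 : G 0 = 0 := by simp [hGdef]
  have hE := tendsto_potential_expansion hfd hf1 hb hG hG0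
  rw [abs_of_neg hf1']
  set r := Real.sqrt (-deriv f 1) with hr
  have hr0 : 0 < r := Real.sqrt_pos.mpr (by linarith)
  have hra : -deriv f 1 = r ^ 2 := (Real.sq_sqrt (by linarith)).symm
  rw [hra] at hE ⊢
  set b := deriv (deriv f) 1
  have hs0 : Tendsto (fun s : ℝ => s) (𝓝[>] 0) (𝓝 0) := nhdsWithin_le_nhds
  have hlim : Tendsto (fun s => 2 * G s / s ^ 2) (𝓝[>] 0) (𝓝 (r ^ 2)) := by
    have h1 := (hE.mul hs0).add_const (r ^ 2)
    rw [mul_zero, zero_add] at h1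
    refine h1.congr' ?_
    filter_upwards [self_mem_nhdsWithin] with s hs
    have hs : s ≠ 0 := ne_of_gt hs
    field_simp
    ring
  have hδ : Tendsto (fun uc : ℝ => 1 - uc) (𝓝[<] 1) (𝓝[>] 0) := by
    refine tendsto_nhdsWithin_iff.mpr ⟨?_, ?_⟩
    · have : Tendsto (fun uc : ℝ => 1 - uc) (𝓝 1) (𝓝 (1 - 1)) :=
        tendsto_const_nhds.sub tendsto_id
      rw [sub_self] at this
      exact this.mono_left nhdsWithin_le_nhds
    · filter_upwards [self_mem_nhdsWithin] with uc huc
      exact Set.mem_Ioi.mpr (sub_pos.mpr huc)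
  have hδ0 := hs0.comp hδ
  have hEδ := hE.comp hδ
  have hbounds := fun η hη => eventually_speed_bounds (η := η) hf0 hvstar hG hG0 hr0 hlim hη
  set R : ℝ → ℝ := fun uc =>
    (2 * G (1 - uc) - (vstar uc * uc) ^ 2) / (vstar uc * (1 - uc) ^ 2) with hRdef
  have hR : Tendsto R (𝓝[<] 1) (𝓝 r) := by
    refine Metric.tendsto_nhds.mpr fun η hη => ?_
    filter_upwards [hbounds (η / 2) (by positivity)] with uc h
    rw [Real.dist_eq]
    exact h.2.trans_lt (by linarith)
  have huc : Tendsto (fun uc : ℝ => uc) (𝓝[<] 1) (𝓝 1) := nhdsWithin_le_nhds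
  have hIoo : ∀ᶠ uc in 𝓝[<] (1:ℝ), uc ∈ Set.Ioo (0:ℝ) 1 := Ioo_mem_nhdsLT one_pos
  have hx : Tendsto (fun uc => vstar uc / (1 - uc)) (𝓝[<] 1) (𝓝 r) := by
    have h1 : Tendsto (fun uc => vstar uc * uc / (1 - uc)) (𝓝[<] 1) (𝓝 r) := by
      refine Metric.tendsto_nhds.mpr fun η hη => ?_
      filter_upwards [hbounds (η / 2) (by positivity)] with uc h
      rw [Real.dist_eq]
      exact h.1.trans_lt (by linarith)
    have h2 := h1.div huc one_ne_zero
    rw [div_one] at h2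
    refine h2.congr' ?_
    filter_upwards [hIoo] with uc h
    have h3 : uc ≠ 0 := h.1.ne'
    have h4 : 1 - uc ≠ 0 := (sub_pos.mpr h.2).ne'
    simp only [Pi.div_apply]
    field_simp
  -- With `x = v / δ`, the definition of `R` reads
  -- `(x² - a) / δ = (2 G(δ) / δ² - a) / δ - x R + x² (2 - δ)`.
  have hmain := ((hEδ.sub (hx.mul hR)).add ((hx.pow 2).mul (hδ0.const_sub 2))).div
    (hx.add_const r) (by positivity)
  have hval : (b / 3 - r * r + r ^ 2 * (2 - 0)) / (r + r) = 1 / 6 * r * (3 + b / r ^ 2) := by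
    field_simp
    ring
  rw [hval] at hmain
  refine hmain.congr' ?_
  filter_upwards [hIoo] with uc h
  obtain ⟨hv, U, hU⟩ := hvstar uc h
  have hv' := (hU.tail h.1 hv).1
  have hd : 0 < 1 - uc := sub_pos.mpr h.2
  have hsum : vstar uc / (1 - uc) + r ≠ 0 := by positivity
  simp only [Pi.div_apply, Function.comp_apply, hRdef]
  rw [div_eq_iff hsum]
  generalize G (1 - uc) = g
  obtain ⟨d, rfl⟩ : ∃ d, uc = 1 - d := ⟨1 - uc, by ring⟩
  rw [sub_sub_cancel] at hd ⊢
  field_simp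
  ring
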